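/- Let d be a differential on a polarized bigraded Hodge–Lefschetz structure (H, N₁, N₂, ψ). For each (a, b) set L_{a,b} := ker(d : H_{a,b} → H_{a−1,b−1}) / d(H_{a+1,b+1}). Then N₁, N₂ and ψ descend to well-defined operators and a bilinear form on L := ⨁_{(a,b)} L_{a,b}, and (L, N₁, N₂) together with the induced form ψ is again a polarized bigraded Hodge–Lefschetz structure. Moreover, under the isomorphism L_{a,b} ≅ ker(Δ) ∩ H_{a,b}, the primitive part of L_{a,b} corresponds to ker(Δ) ∩ P_{a,b}, i.e., the decomposition of L into primitive parts is induced by that of H. -/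

import Mathlib

namespace HLS

variable {H : Type} [AddCommGroup H] [Module ℝ H]

/-- The primitive part `P_{a,b} = H_{a,b} ∩ ker(N₁^{a+1}) ∩ ker(N₂^{b+1})`, for `a, b ≥ 0`. -/
def prim (Hgr : ℤ → ℤ → Submodule ℝ H) (N₁ N₂ : H →ₗ[ℝ] H) (a b : ℕ) : Submodule ℝ H :=
  Hgr (a : ℤ) (b : ℤ) ⊓ LinearMap.ker (N₁ ^ (a + 1)) ⊓ LinearMap.ker (N₂ ^ (b + 1))

/-- A bigraded Hodge–Lefschetz structure: a finite-dimensional real vector space `H`,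
a direct sum decomposition `H = ⨁_{(a,b)} H_{a,b}`, and commuting operators `N₁, N₂` of
bidegrees `(-2,0)` and `(0,-2)` with `N₁^a : H_{a,b} → H_{-a,b}` and
`N₂^b : H_{a,b} → H_{a,-b}` isomorphisms for `a ≥ 0`, resp. `b ≥ 0`. -/
structure IsHL (Hgr : ℤ → ℤ → Submodule ℝ H) (N₁ N₂ : H →ₗ[ℝ] H) : Prop where
  findim : FiniteDimensional ℝ H
  internal : DirectSum.IsInternal (fun p : ℤ × ℤ => Hgr p.1 p.2)
  mapN₁ : ∀ a b : ℤ, ∀ x ∈ Hgr a b, N₁ x ∈ Hgr (a - 2) b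
  mapN₂ : ∀ a b : ℤ, ∀ x ∈ Hgr a b, N₂ x ∈ Hgr a (b - 2)
  comm : N₁ ∘ₗ N₂ = N₂ ∘ₗ N₁
  bijN₁ : ∀ (a : ℕ) (b : ℤ),
    Submodule.map (N₁ ^ a) (Hgr (a : ℤ) b) = Hgr (-(a : ℤ)) b ∧
    ∀ x ∈ Hgr (a : ℤ) b, (N₁ ^ a) x = 0 → x = 0
  bijN₂ : ∀ (a : ℤ) (b : ℕ),
    Submodule.map (N₂ ^ b) (Hgr a (b : ℤ)) = Hgr a (-(b : ℤ)) ∧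
    ∀ x ∈ Hgr a (b : ℤ), (N₂ ^ b) x = 0 → x = 0

/-- A polarization on a bigraded Hodge–Lefschetz structure. -/
structure IsPolarization (Hgr : ℤ → ℤ → Submodule ℝ H) (N₁ N₂ : H →ₗ[ℝ] H)
    (ψ : H →ₗ[ℝ] H →ₗ[ℝ] ℝ) : Prop where
  orth : ∀ a b a' b' : ℤ, ¬ (a + a' = 0 ∧ b + b' = 0) →
    ∀ x ∈ Hgr a b, ∀ y ∈ Hgr a' b', ψ x y = 0
  primSymm : ∀ a b : ℕ, ∀ x ∈ prim Hgr N₁ N₂ a b, ∀ y ∈ prim Hgr N₁ N₂ a b,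
    ψ x (((N₁ ^ a) ∘ₗ (N₂ ^ b)) y) = ψ y (((N₁ ^ a) ∘ₗ (N₂ ^ b)) x)
  primPosDef : ∀ a b : ℕ, ∀ x ∈ prim Hgr N₁ N₂ a b, x ≠ 0 →
    0 < ψ x (((N₁ ^ a) ∘ₗ (N₂ ^ b)) x)
  skew₁ : ∀ x y : H, ψ (N₁ x) y + ψ x (N₁ y) = 0
  skew₂ : ∀ x y : H, ψ (N₂ x) y + ψ x (N₂ y) = 0

/-- The defining property of the operator `w`:
`w(N₁^r N₂^s x) = (-1)^{r+s} (r!/(a-r)!)(s!/(b-s)!) N₁^{a-r} N₂^{b-s} x` for `x ∈ P_{a,b}`,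
`r ≤ a`, `s ≤ b`, and `w(N₁^r N₂^s x) = 0` otherwise.  (By the primitive decomposition this
determines `w` uniquely.) -/
def IsW (Hgr : ℤ → ℤ → Submodule ℝ H) (N₁ N₂ : H →ₗ[ℝ] H) (w : H →ₗ[ℝ] H) : Prop :=
  ∀ a b r s : ℕ, ∀ x ∈ prim Hgr N₁ N₂ a b,
    w (((N₁ ^ r) ∘ₗ (N₂ ^ s)) x) =
      if r ≤ a ∧ s ≤ b then
        ((-1 : ℝ) ^ (r + s) * ((r.factorial : ℝ) / ((a - r).factorial : ℝ)) *
          ((s.factorial : ℝ) / ((b - s).factorial : ℝ))) •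
          (((N₁ ^ (a - r)) ∘ₗ (N₂ ^ (b - s))) x)
      else 0

/-- A differential on a polarized bigraded Hodge–Lefschetz structure. -/
structure IsDifferential (Hgr : ℤ → ℤ → Submodule ℝ H) (N₁ N₂ : H →ₗ[ℝ] H)
    (ψ : H →ₗ[ℝ] H →ₗ[ℝ] ℝ) (dd : H →ₗ[ℝ] H) : Prop where
  mem : ∀ a b : ℤ, ∀ x ∈ Hgr a b, dd x ∈ Hgr (a - 1) (b - 1)
  sq : ∀ x, dd (dd x) = 0
  commN₁ : dd ∘ₗ N₁ = N₁ ∘ₗ dd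
  commN₂ : dd ∘ₗ N₂ = N₂ ∘ₗ dd
  skew : ∀ x y : H, ψ (dd x) y + ψ x (dd y) = 0

/-- The codifferential `d* = - w⁻¹ ∘ d ∘ w`. -/
def dstar (w winv dd : H →ₗ[ℝ] H) : H →ₗ[ℝ] H := -(winv ∘ₗ dd ∘ₗ w)

/-- The Laplacian `Δ = d d* + d* d`. -/
def lap (w winv dd : H →ₗ[ℝ] H) : H →ₗ[ℝ] H :=
  dd ∘ₗ dstar w winv dd + dstar w winv dd ∘ₗ dd


/-- The cocycles `ker(d : H_{a,b} → H_{a-1,b-1})`. -/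
def Zc (Hgr : ℤ → ℤ → Submodule ℝ H) (dd : H →ₗ[ℝ] H) (a b : ℤ) : Submodule ℝ H :=
  LinearMap.ker dd ⊓ Hgr a b

/-- The coboundaries `d(H_{a+1,b+1})`. -/
def Bc (Hgr : ℤ → ℤ → Submodule ℝ H) (dd : H →ₗ[ℝ] H) (a b : ℤ) : Submodule ℝ H :=
  Submodule.map dd (Hgr (a + 1) (b + 1))

/-- The harmonic elements `ker Δ ∩ H_{a,b}`. -/
def Kc (Hgr : ℤ → ℤ → Submodule ℝ H) (w winv dd : H →ₗ[ℝ] H) (a b : ℤ) : Submodule ℝ H :=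
  LinearMap.ker (lap w winv dd) ⊓ Hgr a b

end HLS

/-!
Conjugation by the Weyl element `w` exchanges the lowering operators `N₁`, `N₂` with the raising
operators of two commuting `sl₂`-actions, and `φ x y = ψ x (w y)` is positive definite with
`d* = -w⁻¹ d w` adjoint to `d`, so finite-dimensional Hodge theory gives `ker d = ker Δ ⊕ im d`
in each bidegree. The key point is that `Δ` commutes with `N₁` and `N₂`: then `ker Δ` inherits the
Lefschetz isomorphisms, the primitive parts and the form, and so does the cohomology.

Let `L₁ = -w N₁ w⁻¹` and `L₂ = -w N₂ w⁻¹`. Since `d` commutes with `N₁`, conjugation gives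
`[N₁, d*] = w⁻¹ [L₁, d] w`. With respect to each `sl₂`, `d` is one half of a two-dimensional
representation: on a string of length `A` it takes values in strings of lengths `A - 1` and
`A + 1`. Computing on such strings, `w` exchanges the two operators in the sense that
`[L₁, d] w = -w [L₂, d]`. Hence `[N₁, d*] = -[L₂, d]`, and
`[N₁, Δ] = -d [L₂, d] - [L₂, d] d = 0` because `d² = 0`.
-/

namespace HLS

section Lefschetz

variable {R V : Type*} [Ring R] [AddCommGroup V] [Module R V]
  {G G' : ℤ → Submodule R V} {N K : Module.End R V}

/-- A bounded Lefschetz structure in one variable: the rows and columns of a bigraded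
Hodge–Lefschetz structure are of this kind. The pieces `G a` need not be independent. -/
structure IsLefschetz (G : ℤ → Submodule R V) (N : Module.End R V) : Prop where
  apply_mem : ∀ a, ∀ x ∈ G a, N x ∈ G (a - 2)
  bijOn_pow : ∀ a : ℕ, Set.BijOn (N ^ a) (G a) (G (-(a : ℤ)))
  eventually_eq_bot : ∀ᶠ a in Filter.atTop, G a = ⊥

/-- The primitive vectors of weight `A - 1`, which generate `N`-strings `x, N x, …, N ^ (A - 1) x`.
They are indexed by the length `A` of the string and not by the weight, because an operator of
degree `-1` sends those of length `A` to combinations of strings of lengths `A - 1` and `A + 1`;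
for `A = 0` there are none but `0`. -/
def primitives (G : ℤ → Submodule R V) (N : Module.End R V) (A : ℕ) : Submodule R V :=
  G ((A : ℤ) - 1) ⊓ LinearMap.ker (N ^ A)

lemma pow_apply_comm (h : Commute N K) (r s : ℕ) (x : V) :
    (N ^ r) ((K ^ s) x) = (K ^ s) ((N ^ r) x) :=
  LinearMap.congr_fun (h.pow_pow r s).eq x

lemma pow_succ_apply (N : Module.End R V) (k : ℕ) (x : V) : (N ^ (k + 1)) x = (N ^ k) (N x) := by
  rw [pow_succ, Module.End.mul_apply]

lemma pow_succ_apply' (N : Module.End R V) (k : ℕ) (x : V) : (N ^ (k + 1)) x = N ((N ^ k) x) := by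
  rw [pow_succ', Module.End.mul_apply]

lemma pow_apply_mem (hG : ∀ a, ∀ x ∈ G a, N x ∈ G (a - 2)) (k : ℕ) {a c : ℤ} (hc : a - 2 * k = c)
    {x : V} (hx : x ∈ G a) : (N ^ k) x ∈ G c := by
  induction k generalizing c with
  | zero => simpa [← hc] using hx
  | succ k ih =>
    rw [pow_succ_apply', show c = a - 2 * k - 2 by push_cast at hc; lia]
    exact hG _ _ (ih rfl)

namespace IsLefschetz

lemma inf_ker (h : IsLefschetz G N) (h' : IsLefschetz G' N) (hc : Commute N K)
    (hK : ∀ a, ∀ x ∈ G a, K x ∈ G' a) : IsLefschetz (fun a => G a ⊓ LinearMap.ker K) N where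
  apply_mem a x hx := by
    refine ⟨h.apply_mem a x hx.1, ?_⟩
    have hNK : N (K x) = K (N x) := LinearMap.congr_fun hc.eq x
    rw [SetLike.mem_coe, LinearMap.mem_ker, ← hNK, LinearMap.mem_ker.1 hx.2, map_zero]
  bijOn_pow a := by
    have hNK (x : V) : (N ^ a) (K x) = K ((N ^ a) x) := LinearMap.congr_fun (hc.pow_left a).eq x
    refine ⟨fun x hx => ⟨(h.bijOn_pow a).mapsTo hx.1, ?_⟩,
      (h.bijOn_pow a).injOn.mono fun x hx => hx.1, fun y hy => ?_⟩
    · rw [SetLike.mem_coe, LinearMap.mem_ker, ← hNK, LinearMap.mem_ker.1 hx.2, map_zero]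
    · obtain ⟨x, hx, rfl⟩ := (h.bijOn_pow a).surjOn hy.1
      refine ⟨x, ⟨hx, (h'.bijOn_pow a).injOn (hK _ _ hx) (zero_mem _) ?_⟩, rfl⟩
      rw [hNK, LinearMap.mem_ker.1 hy.2, map_zero]
  eventually_eq_bot := h.eventually_eq_bot.mono fun a ha => by rw [ha, bot_inf_eq]

lemma exists_primitives_add_apply (h : IsLefschetz G N) {A : ℕ} {u : V}
    (hu : u ∈ G ((A : ℤ) - 1)) :
    ∃ y₀ ∈ primitives G N A, ∃ y₁ ∈ G ((A : ℤ) + 1), u = y₀ + N y₁ := by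
  obtain ⟨y₁, hy₁, hNy₁⟩ := (h.bijOn_pow (A + 1)).surjOn
    (pow_apply_mem h.apply_mem A (c := -((A + 1 : ℕ) : ℤ)) (by push_cast; ring) hu)
  have hy₁' : y₁ ∈ G ((A : ℤ) + 1) := by simpa using hy₁
  refine ⟨u - N y₁, ⟨sub_mem hu ?_, ?_⟩, y₁, hy₁', (sub_add_cancel _ _).symm⟩
  · convert h.apply_mem _ _ hy₁' using 2
    ring
  · rw [SetLike.mem_coe, LinearMap.mem_ker, map_sub, ← pow_succ_apply, hNy₁, sub_self]

lemma exists_primitives_add_apply_primitives (h : IsLefschetz G N) {A : ℕ} {u : V}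
    (hu : u ∈ G ((A : ℤ) - 1)) (hNu : (N ^ (A + 1)) u = 0) :
    ∃ y₀ ∈ primitives G N A, ∃ y₁ ∈ primitives G N (A + 2), u = y₀ + N y₁ := by
  obtain ⟨y₀, hy₀, y₁, hy₁, rfl⟩ := h.exists_primitives_add_apply hu
  refine ⟨y₀, hy₀, y₁, ⟨?_, ?_⟩, rfl⟩
  · rwa [show ((A + 2 : ℕ) : ℤ) - 1 = A + 1 by push_cast; ring]
  · rwa [map_add, pow_succ_apply' N A y₀, hy₀.2, map_zero, zero_add, ← pow_succ_apply] at hNu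

lemma le_of_primitives_strings (h : IsLefschetz G N) {a : ℤ} {S : Submodule R V}
    (hS : ∀ r r' : ℕ, (r' : ℤ) - r = a → ∀ y ∈ primitives G N (r + r' + 1), (N ^ r) y ∈ S) :
    G a ≤ S := by
  obtain ⟨M, hM⟩ := Filter.eventually_atTop.1 h.eventually_eq_bot
  have nonneg_case (n c : ℕ) (hn : M ≤ c + n) (S : Submodule R V)
      (hS : ∀ r r' : ℕ, (r' : ℤ) - r = c → ∀ y ∈ primitives G N (r + r' + 1), (N ^ r) y ∈ S) :
      G c ≤ S := by
    induction n generalizing c S with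
    | zero => simp [hM c (by simpa using hn)]
    | succ n ih =>
      intro x hx
      obtain ⟨y₀, hy₀, y₁, hy₁, rfl⟩ :=
        h.exists_primitives_add_apply (A := c + 1) (u := x) (by simpa using hx)
      refine add_mem (hS 0 c (by simp) y₀ (by simpa using hy₀)) ?_
      refine ih (c + 2) (by push_cast at hn ⊢; lia) (S.comap N) (fun r r' hr y hy => ?_)
        (by convert hy₁ using 2; push_cast; ring)
      obtain ⟨r', rfl⟩ : ∃ t, r' = t + 1 := ⟨r' - 1, by lia⟩
      rw [Submodule.mem_comap, ← pow_succ_apply']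
      exact hS (r + 1) r' (by push_cast at hr ⊢; lia) y
        (by convert hy using 1; lia)
  rcases le_total 0 a with ha | ha
  · lift a to ℕ using ha
    exact nonneg_case (M - a).toNat a (by lia) S hS
  · obtain ⟨c, rfl⟩ : ∃ c : ℕ, a = -c := ⟨a.natAbs, by lia⟩
    intro x hx
    obtain ⟨y, hy, rfl⟩ := (h.bijOn_pow c).surjOn hx
    refine nonneg_case (M - c).toNat c (by lia) (S.comap (N ^ c)) (fun r r' hr y hy => ?_) hy
    rw [Submodule.mem_comap, ← Module.End.mul_apply, ← pow_add, show c + r = r' by lia]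
    exact hS r' r (by lia) y (by rwa [add_comm r'])

variable {B : ℤ → Submodule R V}

lemma mem_of_pow_apply_mem (hG : IsLefschetz G N) (hB : ∀ a, ∀ x ∈ B a, N x ∈ B (a - 2))
    (hGB : ∀ a, Disjoint (G a) (B a)) {a : ℕ} {x : V} (hx : x ∈ G a ⊔ B a)
    (hNx : (N ^ a) x ∈ B (-(a : ℤ))) : x ∈ B a := by
  obtain ⟨z, hz, b, hb, rfl⟩ := Submodule.mem_sup.1 hx
  have hNb : (N ^ a) b ∈ B (-(a : ℤ)) := pow_apply_mem hB a (by ring) hb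
  have hNz : (N ^ a) z = 0 := by
    refine Submodule.disjoint_def.1 (hGB _) _ ((hG.bijOn_pow a).mapsTo hz) ?_
    simpa using sub_mem hNx hNb
  obtain rfl : z = 0 := (hG.bijOn_pow a).injOn hz (zero_mem _) (by rw [hNz, map_zero])
  simpa using hb

lemma exists_sub_pow_apply_mem (hG : IsLefschetz G N) {a : ℕ} {y : V}
    (hy : y ∈ G (-(a : ℤ)) ⊔ B (-(a : ℤ))) : ∃ x ∈ G a, y - (N ^ a) x ∈ B (-(a : ℤ)) := by
  obtain ⟨z, hz, b, hb, rfl⟩ := Submodule.mem_sup.1 hy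
  obtain ⟨x, hx, rfl⟩ := (hG.bijOn_pow a).surjOn hz
  exact ⟨x, hx, by simpa using hb⟩

end IsLefschetz

end Lefschetz

section Bigraded

variable {H : Type} [AddCommGroup H] [Module ℝ H] {Hgr : ℤ → ℤ → Submodule ℝ H}
  {N₁ N₂ : H →ₗ[ℝ] H} {A B : ℕ} {x y : H}

/-- The bigraded primitive vectors generating `N₁`-strings of length `A` and `N₂`-strings of
length `B`, so that `P_{a,b}` is `primOfLength Hgr N₁ N₂ (a + 1) (b + 1)`; see `primitives` for
the choice of indices. -/
def primOfLength (Hgr : ℤ → ℤ → Submodule ℝ H) (N₁ N₂ : H →ₗ[ℝ] H) (A B : ℕ) : Submodule ℝ H :=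
  Hgr ((A : ℤ) - 1) ((B : ℤ) - 1) ⊓ LinearMap.ker (N₁ ^ A) ⊓ LinearMap.ker (N₂ ^ B)

lemma prim_eq_primOfLength (a b : ℕ) :
    prim Hgr N₁ N₂ a b = primOfLength Hgr N₁ N₂ (a + 1) (b + 1) := by
  simp [prim, primOfLength]

lemma primOfLength_swap :
    primOfLength (fun a b => Hgr b a) N₂ N₁ B A = primOfLength Hgr N₁ N₂ A B :=
  inf_right_comm _ _ _

lemma prim_swap (a b : ℕ) : prim (fun a b => Hgr b a) N₂ N₁ b a = prim Hgr N₁ N₂ a b :=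
  inf_right_comm _ _ _

namespace IsHL

lemma commute (h : IsHL Hgr N₁ N₂) : Commute N₁ N₂ := h.comm

lemma swap (h : IsHL Hgr N₁ N₂) : IsHL (fun a b => Hgr b a) N₂ N₁ where
  findim := h.findim
  internal := by
    have hi := h.internal
    rw [DirectSum.isInternal_submodule_iff_iSupIndep_and_iSup_eq_top] at hi ⊢
    exact ⟨hi.1.comp (Equiv.prodComm ℤ ℤ).injective,
      ((Equiv.prodComm ℤ ℤ).iSup_comp (g := fun p => Hgr p.1 p.2)).trans hi.2⟩
  mapN₁ a b := h.mapN₂ b a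
  mapN₂ a b := h.mapN₁ b a
  comm := h.comm.symm
  bijN₁ a b := h.bijN₂ b a
  bijN₂ a b := h.bijN₁ b a

lemma isLefschetz (h : IsHL Hgr N₁ N₂) (b : ℤ) : IsLefschetz (fun a => Hgr a b) N₁ where
  apply_mem a := h.mapN₁ a b
  bijOn_pow a := by
    obtain ⟨hsurj, hinj⟩ := h.bijN₁ a b
    have himage : (N₁ ^ a) '' Hgr a b = Hgr (-a) b := by rw [← hsurj, Submodule.map_coe]
    refine himage ▸ Set.InjOn.bijOn_image fun x hx y hy hxy => sub_eq_zero.1 ?_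
    exact hinj _ (sub_mem hx hy) (by rw [map_sub, sub_eq_zero.2 hxy])
  eventually_eq_bot := by
    have := h.findim
    have hfinite := WellFoundedGT.finite_ne_bot_of_iSupIndep h.internal.submodule_iSupIndep
    have hrow := hfinite.preimage (Prod.mk_left_injective b).injOn
    filter_upwards [Filter.atTop_le_cofinite hrow.compl_mem_cofinite] with a ha using not_not.1 ha

lemma isLefschetz_primitives (h : IsHL Hgr N₁ N₂) (A : ℕ) :
    IsLefschetz (fun b => primitives (fun a => Hgr a b) N₁ A) N₂ :=
  (h.swap.isLefschetz _).inf_ker (h.swap.isLefschetz ((A : ℤ) - 1 - 2 * A))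
    (h.commute.symm.pow_right A)
    fun b _ hx => pow_apply_mem (h.isLefschetz b).apply_mem A rfl hx

lemma exists_primOfLength_decomp (h : IsHL Hgr N₁ N₂) {u : H}
    (hu : u ∈ Hgr ((A : ℤ) - 1) ((B : ℤ) - 1)) (hN₁ : (N₁ ^ (A + 1)) u = 0)
    (hN₂ : (N₂ ^ (B + 1)) u = 0) :
    ∃ y₀₀ ∈ primOfLength Hgr N₁ N₂ A B, ∃ y₀₁ ∈ primOfLength Hgr N₁ N₂ A (B + 2),
    ∃ y₁₀ ∈ primOfLength Hgr N₁ N₂ (A + 2) B, ∃ y₁₁ ∈ primOfLength Hgr N₁ N₂ (A + 2) (B + 2),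
      u = y₀₀ + N₂ y₀₁ + N₁ (y₁₀ + N₂ y₁₁) := by
  have hrow : IsLefschetz (fun a => Hgr a ((B : ℤ) - 1) ⊓ LinearMap.ker (N₂ ^ (B + 1))) N₁ :=
    (h.isLefschetz _).inf_ker (h.isLefschetz ((B : ℤ) - 1 - 2 * (B + 1 : ℕ)))
      (h.commute.pow_right _)
      fun a _ hx => pow_apply_mem (h.swap.isLefschetz a).apply_mem (B + 1) rfl hx
  obtain ⟨u₀, ⟨⟨hu₀, hN₂u₀⟩, hN₁u₀⟩, u₁, ⟨⟨hu₁, hN₂u₁⟩, hN₁u₁⟩, rfl⟩ :=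
    hrow.exists_primitives_add_apply_primitives ⟨hu, hN₂⟩ hN₁
  obtain ⟨y₀₀, hy₀₀, y₀₁, hy₀₁, rfl⟩ :=
    (h.isLefschetz_primitives A).exists_primitives_add_apply_primitives ⟨hu₀, hN₁u₀⟩ hN₂u₀
  obtain ⟨y₁₀, hy₁₀, y₁₁, hy₁₁, rfl⟩ :=
    (h.isLefschetz_primitives (A + 2)).exists_primitives_add_apply_primitives ⟨hu₁, hN₁u₁⟩ hN₂u₁
  exact ⟨y₀₀, hy₀₀, y₀₁, hy₀₁, y₁₀, hy₁₀, y₁₁, hy₁₁, rfl⟩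

lemma le_of_strings (h : IsHL Hgr N₁ N₂) {a b : ℤ} {S : Submodule ℝ H}
    (hS : ∀ r r' s s' : ℕ, (r' : ℤ) - r = a → (s' : ℤ) - s = b →
      ∀ x ∈ primOfLength Hgr N₁ N₂ (r + r' + 1) (s + s' + 1), (N₁ ^ r) ((N₂ ^ s) x) ∈ S) :
    Hgr a b ≤ S :=
  (h.isLefschetz b).le_of_primitives_strings fun r r' hr _ hy =>
    (h.isLefschetz_primitives (r + r' + 1)).le_of_primitives_strings (S := S.comap (N₁ ^ r))
      (fun s s' hs x hx => hS r r' s s' hr hs x hx) hy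

lemma eq_top_of_strings (h : IsHL Hgr N₁ N₂) {S : Submodule ℝ H}
    (hS : ∀ r r' s s' : ℕ, ∀ x ∈ primOfLength Hgr N₁ N₂ (r + r' + 1) (s + s' + 1),
      (N₁ ^ r) ((N₂ ^ s) x) ∈ S) : S = ⊤ :=
  top_le_iff.1 <| h.internal.submodule_iSup_eq_top.ge.trans <|
    iSup_le fun _ => h.le_of_strings fun r r' s s' _ _ => hS r r' s s'

lemma string_mem (h : IsHL Hgr N₁ N₂) {r r' s s' : ℕ} (hr : r + r' + 1 = A)
    (hs : s + s' + 1 = B) (hx : x ∈ primOfLength Hgr N₁ N₂ A B) :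
    (N₁ ^ r) ((N₂ ^ s) x) ∈ Hgr ((r' : ℤ) - r) ((s' : ℤ) - s) := by
  have hN₂x : (N₂ ^ s) x ∈ Hgr ((A : ℤ) - 1) ((s' : ℤ) - s) :=
    pow_apply_mem (h.swap.isLefschetz _).apply_mem s (by lia) hx.1.1
  exact pow_apply_mem (h.isLefschetz _).apply_mem r (by lia) hN₂x

lemma string_eq_zero (h : IsHL Hgr N₁ N₂) (hx : x ∈ primOfLength Hgr N₁ N₂ A B) {r s : ℕ}
    (hrs : A ≤ r ∨ B ≤ s) : (N₁ ^ r) ((N₂ ^ s) x) = 0 := by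
  rcases hrs with hr | hs
  · rw [pow_apply_comm h.commute, Module.End.pow_map_zero_of_le hr hx.1.2, map_zero]
  · rw [Module.End.pow_map_zero_of_le hs hx.2, map_zero]

end IsHL

end Bigraded

section StringTops

variable {R V : Type*} [CommRing R] [AddCommGroup V] [Module R V] {L N D : Module.End R V}

/-- The vectors generating an `sl₂`-string of length `A` for the lowering operator `N` and the
raising operator `L`. -/
def stringTops (L N : Module.End R V) (A : ℕ) : Submodule R V :=
  ⨅ i : ℕ, LinearMap.eqLocus (L * N ^ i) (((i : R) * (A - i)) • N ^ (i - 1))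

lemma mem_stringTops {A : ℕ} {x : V} :
    x ∈ stringTops L N A ↔ ∀ i : ℕ, L ((N ^ i) x) = ((i : R) * (A - i)) • (N ^ (i - 1)) x := by
  simp [stringTops]

lemma lie_apply_pow_stringTop (hND : Commute N D) {r r' : ℕ} {x z₀ z₁ : V}
    (hx : x ∈ stringTops L N (r + r' + 1)) (hz₀ : z₀ ∈ stringTops L N (r + r'))
    (hz₁ : z₁ ∈ stringTops L N (r + r' + 2)) (hDx : D x = z₀ + N z₁) :
    ⁅L, D⁆ ((N ^ r) x) = ((r' : R) + 1) • (N ^ r) z₁ - (r : R) • (N ^ (r - 1)) z₀ := by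
  rw [mem_stringTops] at hx hz₀ hz₁
  have hD (k : ℕ) : D ((N ^ k) x) = (N ^ k) z₀ + (N ^ (k + 1)) z₁ := by
    rw [pow_succ_apply, ← map_add, ← hDx]
    exact (LinearMap.congr_fun (hND.pow_left k).eq x).symm
  rw [Ring.lie_def, LinearMap.sub_apply, Module.End.mul_apply, Module.End.mul_apply, hx, map_smul,
    hD, hD, map_add, hz₀, hz₁]
  rcases r with _ | r <;>
  · simp only [Nat.add_sub_cancel]
    push_cast
    module

end StringTops

section Weyl

variable {H : Type} [AddCommGroup H] [Module ℝ H] {Hgr : ℤ → ℤ → Submodule ℝ H}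
  {N₁ N₂ w winv : H →ₗ[ℝ] H} {A B : ℕ} {x : H}

/-- The scalar by which `w` maps the `r`-th vector of a string of length `r + r' + 1` to its
`r'`-th vector, in one variable. -/
noncomputable def weylCoeff (r r' : ℕ) : ℝ := (-1) ^ r * ((r.factorial : ℝ) / (r'.factorial : ℝ))

lemma weylCoeff_ne_zero (r r' : ℕ) : weylCoeff r r' ≠ 0 := by
  unfold weylCoeff
  positivity

lemma weylCoeff_succ_left (r r' : ℕ) : weylCoeff (r + 1) r' = -((r : ℝ) + 1) * weylCoeff r r' := by
  simp only [weylCoeff, Nat.factorial_succ]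
  push_cast
  ring

lemma succ_mul_weylCoeff_succ_right (r r' : ℕ) :
    ((r' : ℝ) + 1) * weylCoeff r (r' + 1) = weylCoeff r r' := by
  simp only [weylCoeff, Nat.factorial_succ]
  push_cast
  field_simp

namespace IsW

lemma apply_string (hw : IsW Hgr N₁ N₂ w) {r r' s s' : ℕ} (hr : r + r' + 1 = A)
    (hs : s + s' + 1 = B) (hx : x ∈ primOfLength Hgr N₁ N₂ A B) :
    w ((N₁ ^ r) ((N₂ ^ s) x)) = (weylCoeff r r' * weylCoeff s s') • (N₁ ^ r') ((N₂ ^ s') x) := by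
  subst hr hs
  rw [← prim_eq_primOfLength] at hx
  have hwx := hw _ _ r s x hx
  rw [if_pos ⟨r.le_add_right r', s.le_add_right s'⟩, Nat.add_sub_cancel_left,
    Nat.add_sub_cancel_left] at hwx
  refine hwx.trans ?_
  rw [LinearMap.comp_apply, weylCoeff, weylCoeff, pow_add]
  congr 1
  ring

lemma swap (h : IsHL Hgr N₁ N₂) (hw : IsW Hgr N₁ N₂ w) :
    IsW (fun a b => Hgr b a) N₂ N₁ w := by
  intro a b r s x hx
  rw [prim_swap] at hx
  have hwx := hw b a s r x hx
  simp only [LinearMap.comp_apply, pow_apply_comm h.commute] at hwx ⊢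
  rw [hwx]
  congr 1
  · exact propext and_comm
  · congr 1
    ring

lemma inv_apply_string (hw : IsW Hgr N₁ N₂ w) (hinv : winv ∘ₗ w = LinearMap.id) {r r' s s' : ℕ}
    (hr : r + r' + 1 = A) (hs : s + s' + 1 = B) (hx : x ∈ primOfLength Hgr N₁ N₂ A B) :
    winv ((N₁ ^ r) ((N₂ ^ s) x)) =
      (weylCoeff r' r * weylCoeff s' s)⁻¹ • (N₁ ^ r') ((N₂ ^ s') x) := by
  have hwx := hw.apply_string (r := r') (r' := r) (s := s') (s' := s) (by lia) (by lia) hx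
  have hc := mul_ne_zero (weylCoeff_ne_zero r' r) (weylCoeff_ne_zero s' s)
  rw [eq_inv_smul_iff₀ hc, ← map_smul, ← hwx]
  exact LinearMap.congr_fun hinv _

end IsW

/-- The raising operator `-w N w⁻¹` obtained by conjugating the lowering operator `N`. -/
def raising (w winv N : H →ₗ[ℝ] H) : H →ₗ[ℝ] H := -(w ∘ₗ N ∘ₗ winv)

lemma raising_mul_weyl (hinv : winv ∘ₗ w = LinearMap.id) (N : H →ₗ[ℝ] H) :
    raising w winv N * w = -(w * N) := by
  change -(w * N * winv) * w = -(w * N)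
  rw [neg_mul, mul_assoc, show winv * w = 1 from hinv, mul_one]

lemma weyl_inv_mul_raising (hinv : winv ∘ₗ w = LinearMap.id) (N : H →ₗ[ℝ] H) :
    winv * raising w winv N = -(N * winv) := by
  change winv * -(w * (N * winv)) = -(N * winv)
  rw [mul_neg, ← mul_assoc, show winv * w = 1 from hinv, one_mul]

lemma raising_apply_string (h : IsHL Hgr N₁ N₂) (hw : IsW Hgr N₁ N₂ w)
    (hinv : winv ∘ₗ w = LinearMap.id) (hx : x ∈ primOfLength Hgr N₁ N₂ A B) (r s : ℕ) :
    raising w winv N₁ ((N₁ ^ r) ((N₂ ^ s) x)) =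
      ((r : ℝ) * (A - r)) • (N₁ ^ (r - 1)) ((N₂ ^ s) x) := by
  rcases le_or_gt B s with hs | hs
  · simp only [h.string_eq_zero hx (Or.inr hs), map_zero, smul_zero]
  rcases lt_trichotomy A r with hr | rfl | hr
  · simp only [h.string_eq_zero hx (Or.inl hr.le),
      h.string_eq_zero hx (Or.inl (Nat.le_sub_one_of_lt hr)), map_zero, smul_zero]
  · rw [h.string_eq_zero hx (Or.inl le_rfl), map_zero, sub_self, mul_zero, zero_smul]
  obtain ⟨r', rfl⟩ := Nat.exists_eq_add_of_lt hr
  obtain ⟨s', rfl⟩ := Nat.exists_eq_add_of_lt hs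
  rw [raising, LinearMap.neg_apply, LinearMap.comp_apply, LinearMap.comp_apply,
    hw.inv_apply_string hinv rfl rfl hx, map_smul, map_smul, ← pow_succ_apply']
  rcases r with _ | r
  · rw [h.string_eq_zero hx (Or.inl (by lia))]
    simp
  rw [hw.apply_string (r' := r) (s' := s) (by lia) (by lia) hx, smul_smul, ← neg_smul]
  congr 1
  rw [weylCoeff_succ_left, ← succ_mul_weylCoeff_succ_right r' r]
  have hr' := weylCoeff_ne_zero r' (r + 1)
  have hs' := weylCoeff_ne_zero s' s
  push_cast
  field_simp
  ring

lemma pow_mem_stringTops_raising (h : IsHL Hgr N₁ N₂) (hw : IsW Hgr N₁ N₂ w)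
    (hinv : winv ∘ₗ w = LinearMap.id) (hx : x ∈ primOfLength Hgr N₁ N₂ A B) (s : ℕ) :
    (N₂ ^ s) x ∈ stringTops (raising w winv N₁) N₁ A :=
  mem_stringTops.2 fun i => raising_apply_string h hw hinv hx i s

/-- The one-variable condition on scalars and exponents that makes `w` map `g • N ^ m x` to
`k • N ^ n x` for every `x` generating a string of length `A`: either the two vectors are opposite
on the string and the scalars match, or both vanish. -/
def WeylRelated (A : ℕ) (g : ℝ) (m : ℕ) (k : ℝ) (n : ℕ) : Prop :=
  (m + n + 1 = A ∧ g * weylCoeff m n = k) ∨ ((g = 0 ∨ A ≤ m) ∧ (k = 0 ∨ A ≤ n))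

namespace WeylRelated

lemma apply_string (h : IsHL Hgr N₁ N₂) (hw : IsW Hgr N₁ N₂ w)
    (hx : x ∈ primOfLength Hgr N₁ N₂ A B) {g₁ g₂ k₁ k₂ : ℝ} {m₁ m₂ n₁ n₂ : ℕ}
    (h₁ : WeylRelated A g₁ m₁ k₁ n₁) (h₂ : WeylRelated B g₂ m₂ k₂ n₂) :
    (g₁ * g₂) • w ((N₁ ^ m₁) ((N₂ ^ m₂) x)) = (k₁ * k₂) • (N₁ ^ n₁) ((N₂ ^ n₂) x) := by
  have vanish {g g' : ℝ} {m m' : ℕ} (hgm : (g = 0 ∨ A ≤ m) ∨ (g' = 0 ∨ B ≤ m')) :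
      (g * g') • (N₁ ^ m) ((N₂ ^ m') x) = 0 := by
    rcases hgm with (rfl | hm) | (rfl | hm)
    · simp
    · rw [h.string_eq_zero hx (Or.inl hm), smul_zero]
    · simp
    · rw [h.string_eq_zero hx (Or.inr hm), smul_zero]
  rw [← map_smul]
  rcases h₁ with ⟨hA, rfl⟩ | ⟨hg₁, hk₁⟩
  · rcases h₂ with ⟨hB, rfl⟩ | ⟨hg₂, hk₂⟩
    · rw [map_smul, hw.apply_string hA hB hx, smul_smul, mul_mul_mul_comm]
    · rw [vanish (Or.inr hg₂), vanish (Or.inr hk₂), map_zero]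
  · rw [vanish (Or.inl hg₁), vanish (Or.inl hk₁), map_zero]

lemma pred_right (r r' : ℕ) :
    WeylRelated (r + r') 1 r (r' * weylCoeff r r') (r' - 1) := by
  rcases r' with _ | r'
  · exact Or.inr (by simp)
  · exact Or.inl ⟨rfl, by
      rw [Nat.add_sub_cancel, one_mul, ← succ_mul_weylCoeff_succ_right, Nat.cast_succ]⟩

lemma succ_left (r r' : ℕ) :
    WeylRelated (r + r' + 2) 1 (r + 1) (-((r : ℝ) + 1) * weylCoeff r r') r' :=
  Or.inl ⟨by lia, by rw [weylCoeff_succ_left, one_mul]⟩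

lemma pred_left (s s' : ℕ) : WeylRelated (s + s') (-s) (s - 1) (weylCoeff s s') s' := by
  rcases s with _ | s
  · exact Or.inr (by simp)
  · exact Or.inl ⟨by lia, by rw [Nat.add_sub_cancel, weylCoeff_succ_left, Nat.cast_succ]⟩

lemma succ_right (s s' : ℕ) :
    WeylRelated (s + s' + 2) ((s' : ℝ) + 1) s (weylCoeff s s') (s' + 1) :=
  Or.inl ⟨by lia, succ_mul_weylCoeff_succ_right s s'⟩

end WeylRelated

variable {ψ : H →ₗ[ℝ] H →ₗ[ℝ] ℝ} {dd : H →ₗ[ℝ] H}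

namespace IsDifferential

lemma swap (hd : IsDifferential Hgr N₁ N₂ ψ dd) :
    IsDifferential (fun a b => Hgr b a) N₂ N₁ ψ dd where
  mem a b := hd.mem b a
  sq := hd.sq
  commN₁ := hd.commN₂
  commN₂ := hd.commN₁
  skew := hd.skew

lemma commute (hd : IsDifferential Hgr N₁ N₂ ψ dd) : Commute N₁ dd := hd.commN₁.symm

lemma apply_pow (hd : IsDifferential Hgr N₁ N₂ ψ dd) (r : ℕ) (x : H) :
    dd ((N₁ ^ r) x) = (N₁ ^ r) (dd x) :=
  (LinearMap.congr_fun (hd.commute.pow_left r).eq x).symm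

lemma exists_primOfLength_decomp (h : IsHL Hgr N₁ N₂) (hd : IsDifferential Hgr N₁ N₂ ψ dd)
    (hx : x ∈ primOfLength Hgr N₁ N₂ (A + 1) (B + 1)) :
    ∃ y₀₀ ∈ primOfLength Hgr N₁ N₂ A B, ∃ y₀₁ ∈ primOfLength Hgr N₁ N₂ A (B + 2),
    ∃ y₁₀ ∈ primOfLength Hgr N₁ N₂ (A + 2) B, ∃ y₁₁ ∈ primOfLength Hgr N₁ N₂ (A + 2) (B + 2),
      dd x = y₀₀ + N₂ y₀₁ + N₁ (y₁₀ + N₂ y₁₁) := by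
  obtain ⟨⟨hx, hN₁x⟩, hN₂x⟩ := hx
  refine h.exists_primOfLength_decomp ?_ ?_ ?_
  · simpa using hd.mem _ _ x hx
  · rw [← hd.apply_pow, LinearMap.mem_ker.1 hN₁x, map_zero]
  · rw [← hd.swap.apply_pow, LinearMap.mem_ker.1 hN₂x, map_zero]

end IsDifferential

lemma lie_raising_apply_string (h : IsHL Hgr N₁ N₂) (hw : IsW Hgr N₁ N₂ w)
    (hinv : winv ∘ₗ w = LinearMap.id) (hd : IsDifferential Hgr N₁ N₂ ψ dd)
    {r r' B₀ B₁ : ℕ} {y₀₀ y₀₁ y₁₀ y₁₁ : H} (hA : r + r' = A)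
    (hx : x ∈ primOfLength Hgr N₁ N₂ (A + 1) B) (hy₀₀ : y₀₀ ∈ primOfLength Hgr N₁ N₂ A B₀)
    (hy₀₁ : y₀₁ ∈ primOfLength Hgr N₁ N₂ A B₁) (hy₁₀ : y₁₀ ∈ primOfLength Hgr N₁ N₂ (A + 2) B₀)
    (hy₁₁ : y₁₁ ∈ primOfLength Hgr N₁ N₂ (A + 2) B₁)
    (hdx : dd x = y₀₀ + N₂ y₀₁ + N₁ (y₁₀ + N₂ y₁₁)) (s : ℕ) :
    ⁅raising w winv N₁, dd⁆ ((N₁ ^ r) ((N₂ ^ s) x)) =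
      ((r' : ℝ) + 1) • ((N₁ ^ r) ((N₂ ^ s) y₁₀) + (N₁ ^ r) ((N₂ ^ (s + 1)) y₁₁)) -
        (r : ℝ) • ((N₁ ^ (r - 1)) ((N₂ ^ s) y₀₀) + (N₁ ^ (r - 1)) ((N₂ ^ (s + 1)) y₀₁)) := by
  subst hA
  have htop {A B : ℕ} {y : H} (hy : y ∈ primOfLength Hgr N₁ N₂ A B) (s : ℕ) :
      (N₂ ^ s) y ∈ stringTops (raising w winv N₁) N₁ A :=
    pow_mem_stringTops_raising h hw hinv hy s
  rw [← map_add, ← map_add]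
  refine lie_apply_pow_stringTop hd.commute (htop hx s)
    (add_mem (htop hy₀₀ s) (htop hy₀₁ (s + 1))) (add_mem (htop hy₁₀ s) (htop hy₁₁ (s + 1))) ?_
  have hN (z : H) : (N₂ ^ s) (N₁ z) = N₁ ((N₂ ^ s) z) :=
    LinearMap.congr_fun (h.commute.symm.pow_left s).eq z
  rw [hd.swap.apply_pow, hdx]
  simp only [map_add, hN, pow_succ_apply]

lemma lie_raising_mul_weyl (h : IsHL Hgr N₁ N₂) (hw : IsW Hgr N₁ N₂ w)
    (hinv : winv ∘ₗ w = LinearMap.id) (hd : IsDifferential Hgr N₁ N₂ ψ dd) :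
    ⁅raising w winv N₁, dd⁆ * w = -(w * ⁅raising w winv N₂, dd⁆) := by
  rw [← LinearMap.eqLocus_eq_top]
  refine h.eq_top_of_strings fun r r' s s' x hx => ?_
  obtain ⟨y₀₀, hy₀₀, y₀₁, hy₀₁, y₁₀, hy₁₀, y₁₁, hy₁₁, hdx⟩ := hd.exists_primOfLength_decomp h hx
  have hN : N₁ (N₂ y₁₁) = N₂ (N₁ y₁₁) := LinearMap.congr_fun h.comm y₁₁
  have hdx' : dd x = y₀₀ + N₁ y₁₀ + N₂ (y₀₁ + N₁ y₁₁) := by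
    rw [hdx, map_add, map_add, hN]
    abel
  have hlie₁ := lie_raising_apply_string h hw hinv hd (add_comm r' r) hx hy₀₀ hy₀₁ hy₁₀ hy₁₁ hdx s'
  have hlie₂ := lie_raising_apply_string h.swap (hw.swap h) hinv hd.swap rfl
    (primOfLength_swap.ge hx) (primOfLength_swap.ge hy₀₀) (primOfLength_swap.ge hy₁₀)
    (primOfLength_swap.ge hy₀₁) (primOfLength_swap.ge hy₁₁)
    hdx' r
  simp only [pow_apply_comm h.commute.symm] at hlie₂
  rw [LinearMap.mem_eqLocus, Module.End.mul_apply, LinearMap.neg_apply, Module.End.mul_apply,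
    hw.apply_string rfl rfl hx, map_smul, hlie₁, hlie₂]
  have hw₀₀ := (WeylRelated.pred_right r r').apply_string h hw hy₀₀ (.pred_left s s')
  have hw₀₁ := (WeylRelated.pred_right r r').apply_string h hw hy₀₁ (.succ_right s s')
  have hw₁₀ := (WeylRelated.succ_left r r').apply_string h hw hy₁₀ (.pred_left s s')
  have hw₁₁ := (WeylRelated.succ_left r r').apply_string h hw hy₁₁ (.succ_right s s')
  simp only [map_sub, map_add, map_smul]
  linear_combination (norm := module) hw₀₀ + hw₀₁ + hw₁₀ + hw₁₁

lemma lie_dstar (h : IsHL Hgr N₁ N₂) (hw : IsW Hgr N₁ N₂ w)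
    (hinv : winv ∘ₗ w = LinearMap.id) (hd : IsDifferential Hgr N₁ N₂ ψ dd) :
    ⁅N₁, dstar w winv dd⁆ = -⁅raising w winv N₂, dd⁆ :=
  calc ⁅N₁, -(winv * (dd * w))⁆
      = -(N₁ * winv) * dd * w - winv * dd * -(w * N₁) := by rw [Ring.lie_def]; noncomm_ring
    _ = winv * (⁅raising w winv N₁, dd⁆ * w) := by
      rw [← raising_mul_weyl hinv N₁, ← weyl_inv_mul_raising hinv N₁, Ring.lie_def]
      noncomm_ring
    _ = -(winv * w * ⁅raising w winv N₂, dd⁆) := by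
      rw [lie_raising_mul_weyl h hw hinv hd, mul_neg, mul_assoc]
    _ = -⁅raising w winv N₂, dd⁆ := by rw [show winv * w = 1 from hinv, one_mul]

lemma commute_lap (h : IsHL Hgr N₁ N₂) (hw : IsW Hgr N₁ N₂ w)
    (hinv : winv ∘ₗ w = LinearMap.id) (hd : IsDifferential Hgr N₁ N₂ ψ dd) :
    Commute N₁ (lap w winv dd) := by
  have hdd : dd * dd = 0 := LinearMap.ext hd.sq
  rw [commute_iff_lie_eq]
  calc ⁅N₁, dd * dstar w winv dd + dstar w winv dd * dd⁆
      = ⁅N₁, dd⁆ * dstar w winv dd + dd * ⁅N₁, dstar w winv dd⁆ +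
          (⁅N₁, dstar w winv dd⁆ * dd + dstar w winv dd * ⁅N₁, dd⁆) := by
        simp only [Ring.lie_def]
        noncomm_ring
    _ = dd * dd * raising w winv N₂ - raising w winv N₂ * (dd * dd) := by
        rw [lie_dstar h hw hinv hd, commute_iff_lie_eq.1 hd.commute, Ring.lie_def]
        noncomm_ring
    _ = 0 := by rw [hdd, zero_mul, mul_zero, sub_zero]

namespace IsW

lemma apply_mem (h : IsHL Hgr N₁ N₂) (hw : IsW Hgr N₁ N₂ w) {a b : ℤ} (hx : x ∈ Hgr a b) :
    w x ∈ Hgr (-a) (-b) := by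
  have hle : Hgr a b ≤ (Hgr (-a) (-b)).comap w := h.le_of_strings fun r r' s s' hr hs x hx => by
    rw [Submodule.mem_comap, hw.apply_string rfl rfl hx, ← hr, ← hs, neg_sub, neg_sub]
    exact Submodule.smul_mem _ _ (h.string_mem (by lia) (by lia) hx)
  exact hle hx

lemma inv_apply_mem (h : IsHL Hgr N₁ N₂) (hw : IsW Hgr N₁ N₂ w)
    (hinv : winv ∘ₗ w = LinearMap.id) {a b : ℤ} (hx : x ∈ Hgr a b) :
    winv x ∈ Hgr (-a) (-b) := by
  have hle : Hgr a b ≤ (Hgr (-a) (-b)).comap winv :=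
    h.le_of_strings fun r r' s s' hr hs x hx => by
      rw [Submodule.mem_comap, hw.inv_apply_string hinv rfl rfl hx, ← hr, ← hs, neg_sub, neg_sub]
      exact Submodule.smul_mem _ _ (h.string_mem (by lia) (by lia) hx)
  exact hle hx

end IsW

lemma dstar_apply_mem (h : IsHL Hgr N₁ N₂) (hw : IsW Hgr N₁ N₂ w)
    (hinv : winv ∘ₗ w = LinearMap.id) (hd : IsDifferential Hgr N₁ N₂ ψ dd) {a b : ℤ}
    (hx : x ∈ Hgr a b) : dstar w winv dd x ∈ Hgr (a + 1) (b + 1) := by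
  have hmem := hw.inv_apply_mem h hinv (hd.mem _ _ _ (hw.apply_mem h hx))
  rw [show -(-a - 1) = a + 1 by ring, show -(-b - 1) = b + 1 by ring] at hmem
  exact neg_mem hmem

lemma lap_apply_mem (h : IsHL Hgr N₁ N₂) (hw : IsW Hgr N₁ N₂ w)
    (hinv : winv ∘ₗ w = LinearMap.id) (hd : IsDifferential Hgr N₁ N₂ ψ dd) {a b : ℤ}
    (hx : x ∈ Hgr a b) : lap w winv dd x ∈ Hgr a b := by
  have hdδ := hd.mem _ _ _ (dstar_apply_mem h hw hinv hd hx)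
  have hδd := dstar_apply_mem h hw hinv hd (hd.mem _ _ _ hx)
  rw [add_sub_cancel_right, add_sub_cancel_right] at hdδ
  rw [sub_add_cancel, sub_add_cancel] at hδd
  exact add_mem hdδ hδd

end Weyl

section Positivity

lemma pos_of_iSup_eq_top {ι R V : Type*} [CommRing R] [PartialOrder R] [IsStrictOrderedRing R]
    [AddCommGroup V] [Module R V] {C : ι → Submodule R V} (hC : ⨆ i, C i = ⊤)
    (φ : V →ₗ[R] V →ₗ[R] R) (horth : ∀ i j, i ≠ j → ∀ x ∈ C i, ∀ y ∈ C j, φ x y = 0)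
    (hpos : ∀ i, ∀ x ∈ C i, x ≠ 0 → 0 < φ x x) {x : V} (hx : x ≠ 0) : 0 < φ x x := by
  obtain ⟨f, hf, rfl⟩ := (Submodule.mem_iSup_iff_exists_finsupp C x).1 (hC ▸ Submodule.mem_top)
  have hdiag : φ (f.sum fun _ y => y) (f.sum fun _ y => y) = ∑ i ∈ f.support, φ (f i) (f i) := by
    simp only [Finsupp.sum, map_sum, LinearMap.sum_apply]
    exact Finset.sum_congr rfl fun i hi => Finset.sum_eq_single i
      (fun j _ hji => horth _ _ hji _ (hf _) _ (hf _)) (absurd hi)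
  have hsupp : f.support.Nonempty := by
    contrapose! hx
    simp [Finsupp.sum, hx]
  rw [hdiag]
  exact Finset.sum_pos (fun i hi => hpos i _ (hf i) (Finsupp.mem_support_iff.1 hi)) hsupp

lemma skew_pow_apply {R V : Type*} [CommRing R] [AddCommGroup V] [Module R V]
    {ψ : V →ₗ[R] V →ₗ[R] R} {N : Module.End R V} (hN : ∀ x y, ψ (N x) y + ψ x (N y) = 0) (r : ℕ)
    (x y : V) : ψ ((N ^ r) x) y = (-1) ^ r * ψ x ((N ^ r) y) := by
  induction r generalizing x with
  | zero => simp
  | succ r ih =>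
    rw [pow_succ_apply, ih, eq_neg_of_add_eq_zero_left (hN _ _), ← pow_succ_apply', pow_succ]
    ring

variable {H : Type} [AddCommGroup H] [Module ℝ H] {Hgr : ℤ → ℤ → Submodule ℝ H}
  {N₁ N₂ w winv dd : H →ₗ[ℝ] H} {ψ : H →ₗ[ℝ] H →ₗ[ℝ] ℝ} {A B A' B' : ℕ} {x y : H}

/-- The piece `N₁ ^ r N₂ ^ s P_{r + r', s + s'}` of the primitive decomposition, for
`i = ((r, r'), (s, s'))`. -/
def stringPiece (Hgr : ℤ → ℤ → Submodule ℝ H) (N₁ N₂ : H →ₗ[ℝ] H) (i : (ℕ × ℕ) × (ℕ × ℕ)) :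
    Submodule ℝ H :=
  (primOfLength Hgr N₁ N₂ (i.1.1 + i.1.2 + 1) (i.2.1 + i.2.2 + 1)).map
    ((N₁ ^ i.1.1) ∘ₗ (N₂ ^ i.2.1))

lemma IsHL.iSup_stringPiece (h : IsHL Hgr N₁ N₂) : ⨆ i, stringPiece Hgr N₁ N₂ i = ⊤ :=
  h.eq_top_of_strings fun r r' s s' x hx =>
    Submodule.mem_iSup_of_mem ((r, r'), (s, s')) ⟨x, hx, rfl⟩

namespace IsPolarization

lemma apply_string_string (h : IsHL Hgr N₁ N₂) (hψ : IsPolarization Hgr N₁ N₂ ψ) (r s m n : ℕ)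
    (x y : H) : ψ ((N₁ ^ r) ((N₂ ^ s) x)) ((N₁ ^ m) ((N₂ ^ n) y)) =
      ((-1) ^ r * (-1) ^ s) * ψ x ((N₁ ^ (r + m)) ((N₂ ^ (s + n)) y)) := by
  rw [skew_pow_apply hψ.skew₁, skew_pow_apply hψ.skew₂, ← Module.End.mul_apply (N₁ ^ r), ← pow_add,
    ← pow_apply_comm h.commute, ← Module.End.mul_apply (N₂ ^ s), ← pow_add, mul_assoc]

lemma apply_string_eq_zero (h : IsHL Hgr N₁ N₂) (hψ : IsPolarization Hgr N₁ N₂ ψ)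
    (hx : x ∈ primOfLength Hgr N₁ N₂ A B) (hy : y ∈ primOfLength Hgr N₁ N₂ A' B') {m n : ℕ}
    (hne : ¬(A = m + 1 ∧ A' = m + 1 ∧ B = n + 1 ∧ B' = n + 1)) :
    ψ x ((N₁ ^ m) ((N₂ ^ n) y)) = 0 := by
  by_cases hy0 : A' ≤ m ∨ B' ≤ n
  · rw [h.string_eq_zero hy hy0, map_zero]
  by_cases hx0 : A ≤ m ∨ B ≤ n
  · have hmove := hψ.apply_string_string h m n 0 0 x y
    rw [h.string_eq_zero hx hx0, map_zero, LinearMap.zero_apply] at hmove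
    simpa using hmove
  obtain ⟨k, rfl⟩ := Nat.exists_eq_add_of_lt (not_le.1 (not_or.1 hy0).1)
  obtain ⟨l, rfl⟩ := Nat.exists_eq_add_of_lt (not_le.1 (not_or.1 hy0).2)
  exact hψ.orth _ _ _ _ (by lia) _ hx.1.1 _ (h.string_mem rfl rfl hy)

lemma pos_of_mem_primOfLength (hψ : IsPolarization Hgr N₁ N₂ ψ) {a b : ℕ}
    (hx : x ∈ primOfLength Hgr N₁ N₂ (a + 1) (b + 1)) (hx0 : x ≠ 0) :
    0 < ψ x ((N₁ ^ a) ((N₂ ^ b) x)) :=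
  hψ.primPosDef a b x (by rwa [prim_eq_primOfLength]) hx0

lemma apply_weyl_pos (h : IsHL Hgr N₁ N₂) (hψ : IsPolarization Hgr N₁ N₂ ψ)
    (hw : IsW Hgr N₁ N₂ w) (hx : x ≠ 0) : 0 < ψ x (w x) := by
  refine pos_of_iSup_eq_top h.iSup_stringPiece (ψ.compl₂ w) ?_ ?_ hx
  · rintro ⟨⟨r, r'⟩, s, s'⟩ ⟨⟨m, m'⟩, n, n'⟩ hne _ ⟨x, hx, rfl⟩ _ ⟨y, hy, rfl⟩
    rw [LinearMap.compl₂_apply, LinearMap.comp_apply, LinearMap.comp_apply,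
      hw.apply_string rfl rfl hy, map_smul, hψ.apply_string_string h,
      hψ.apply_string_eq_zero h hx hy, mul_zero, smul_zero]
    simp only [ne_eq, Prod.mk.injEq] at hne
    lia
  · rintro ⟨⟨r, r'⟩, s, s'⟩ _ ⟨x, hx, rfl⟩ hne
    have hx0 : x ≠ 0 := fun hx0 => hne (by rw [hx0, map_zero])
    have hcoeff : (weylCoeff r r' * weylCoeff s s') * ((-1) ^ r * (-1) ^ s) =
        (r.factorial / r'.factorial : ℝ) * (s.factorial / s'.factorial) := by
      have hsq (k : ℕ) : ((-1 : ℝ) ^ k) * (-1) ^ k = 1 := by rw [← mul_pow]; simp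
      rw [weylCoeff, weylCoeff]
      linear_combination (r.factorial / r'.factorial : ℝ) * (s.factorial / s'.factorial) *
        ((-1 : ℝ) ^ s * (-1) ^ s * hsq r + hsq s)
    rw [LinearMap.compl₂_apply, LinearMap.comp_apply, hw.apply_string rfl rfl hx, map_smul,
      hψ.apply_string_string h, smul_eq_mul, ← mul_assoc, hcoeff]
    exact mul_pos (by positivity) (hψ.pos_of_mem_primOfLength hx hx0)

end IsPolarization

end Positivity

section AdjointPair

variable {𝕜 V : Type*} [Field 𝕜] [AddCommGroup V] [Module 𝕜 V] {φ : V →ₗ[𝕜] V →ₗ[𝕜] 𝕜}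
  {d δ : Module.End 𝕜 V} {x : V}

lemma adjoint_apply_eq_zero (hφ : ∀ x, φ x x = 0 → x = 0) (hadj : LinearMap.IsAdjointPair φ φ d δ)
    (hx : d (δ x) = 0) : δ x = 0 :=
  hφ _ (by rw [← hadj, hx, map_zero, LinearMap.zero_apply])

lemma apply_eq_zero_of_adjoint_apply (hφ : ∀ x, φ x x = 0 → x = 0)
    (hadj : LinearMap.IsAdjointPair φ φ d δ) (hx : δ (d x) = 0) : d x = 0 :=
  hφ _ (by rw [hadj, hx, map_zero])

lemma apply_eq_zero_of_laplacian (hφ : ∀ x, φ x x = 0 → x = 0)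
    (hadj : LinearMap.IsAdjointPair φ φ d δ) (hsq : ∀ x, d (d x) = 0)
    (hx : d (δ x) + δ (d x) = 0) : d x = 0 ∧ δ x = 0 := by
  have hdδd : d (δ (d x)) = 0 := by simpa [hsq] using congr_arg d hx
  have hδd : δ (d x) = 0 := adjoint_apply_eq_zero hφ hadj hdδd
  rw [hδd, add_zero] at hx
  exact ⟨apply_eq_zero_of_adjoint_apply hφ hadj hδd, adjoint_apply_eq_zero hφ hadj hx⟩

/- On the space of exact vectors `d δ` is injective, hence bijective, so the exact part of `y` is
found by solving `d δ u = d δ y`. -/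
lemma exists_exact_sub_mem_ker_adjoint [FiniteDimensional 𝕜 V] (hφ : ∀ x, φ x x = 0 → x = 0)
    (hadj : LinearMap.IsAdjointPair φ φ d δ) {W₀ W₁ : Submodule 𝕜 V} (hd : W₁.map d ≤ W₀)
    (hδ : ∀ x ∈ W₀, δ x ∈ W₁) {y : V} (hy : y ∈ W₀) : ∃ u ∈ W₁.map d, δ (y - u) = 0 := by
  have hmem (x : V) (hx : x ∈ W₀) : (d * δ) x ∈ W₁.map d := Submodule.mem_map_of_mem (hδ x hx)
  let T := (d * δ).restrict fun x hx => hmem x (hd hx)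
  have hinj : Function.Injective T := by
    refine (injective_iff_map_eq_zero T).2 fun u hu => Subtype.ext ?_
    have hδu : δ u = 0 := adjoint_apply_eq_zero hφ hadj (congr_arg Subtype.val hu)
    obtain ⟨v, -, hv⟩ := u.2
    rw [← hv] at hδu ⊢
    exact apply_eq_zero_of_adjoint_apply hφ hadj hδu
  obtain ⟨u, hu⟩ := LinearMap.injective_iff_surjective.1 hinj ⟨(d * δ) y, hmem y hy⟩
  refine ⟨u, u.2, adjoint_apply_eq_zero hφ hadj ?_⟩
  have hdδ : d (δ u) = d (δ y) := congr_arg Subtype.val hu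
  rw [map_sub, map_sub, hdδ, sub_self]

end AdjointPair

section Cohomology

variable {H : Type} [AddCommGroup H] [Module ℝ H] {Hgr : ℤ → ℤ → Submodule ℝ H}
  {N₁ N₂ w winv dd : H →ₗ[ℝ] H} {ψ : H →ₗ[ℝ] H →ₗ[ℝ] ℝ} {a b a' b' : ℤ} {x y : H}

lemma IsPolarization.swap (h : IsHL Hgr N₁ N₂) (hψ : IsPolarization Hgr N₁ N₂ ψ) :
    IsPolarization (fun a b => Hgr b a) N₂ N₁ ψ where
  orth a b a' b' hne := hψ.orth b a b' a' (mt And.symm hne)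
  primSymm a b x hx y hy := by
    simp only [LinearMap.comp_apply, ← pow_apply_comm h.commute]
    rw [prim_swap] at hx hy
    exact hψ.primSymm b a x hx y hy
  primPosDef a b x hx := by
    simp only [LinearMap.comp_apply, ← pow_apply_comm h.commute]
    rw [prim_swap] at hx
    exact hψ.primPosDef b a x hx
  skew₁ := hψ.skew₂
  skew₂ := hψ.skew₁

lemma IsPolarization.weyl_anisotropic (h : IsHL Hgr N₁ N₂) (hψ : IsPolarization Hgr N₁ N₂ ψ)
    (hw : IsW Hgr N₁ N₂ w) (x : H) (hx : ψ.compl₂ w x x = 0) : x = 0 := by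
  by_contra hne
  exact (hψ.apply_weyl_pos h hw hne).ne' hx

namespace IsDifferential

lemma isAdjointPair_dstar (h : IsHL Hgr N₁ N₂) (hinv : winv ∘ₗ w = LinearMap.id)
    (hd : IsDifferential Hgr N₁ N₂ ψ dd) :
    LinearMap.IsAdjointPair (ψ.compl₂ w) (ψ.compl₂ w) dd (dstar w winv dd) := fun x y => by
  have := h.findim
  have hw_winv (z : H) : w (winv z) = z :=
    LinearMap.congr_fun ((LinearMap.comp_eq_id_comm ℝ H).1 hinv) z
  have hwδ : w (dstar w winv dd y) = -dd (w y) := (map_neg w _).trans (congr_arg _ (hw_winv _))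
  rw [LinearMap.compl₂_apply, LinearMap.compl₂_apply, hwδ, map_neg]
  exact eq_neg_of_add_eq_zero_left (hd.skew x (w y))

lemma Bc_le_Zc (hd : IsDifferential Hgr N₁ N₂ ψ dd) (a b : ℤ) : Bc Hgr dd a b ≤ Zc Hgr dd a b := by
  rintro _ ⟨v, hv, rfl⟩
  exact ⟨hd.sq v, by simpa using hd.mem _ _ v hv⟩

lemma apply_mem_Zc (h : IsHL Hgr N₁ N₂) (hd : IsDifferential Hgr N₁ N₂ ψ dd)
    (hx : x ∈ Zc Hgr dd a b) : N₁ x ∈ Zc Hgr dd (a - 2) b := by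
  refine ⟨?_, h.mapN₁ a b x hx.2⟩
  have hcomm : dd (N₁ x) = N₁ (dd x) := hd.apply_pow 1 x
  rw [SetLike.mem_coe, LinearMap.mem_ker, hcomm, LinearMap.mem_ker.1 hx.1, map_zero]

lemma apply_mem_Bc (h : IsHL Hgr N₁ N₂) (hd : IsDifferential Hgr N₁ N₂ ψ dd)
    (hx : x ∈ Bc Hgr dd a b) : N₁ x ∈ Bc Hgr dd (a - 2) b := by
  obtain ⟨v, hv, rfl⟩ := hx
  refine ⟨N₁ v, ?_, hd.apply_pow 1 v⟩
  rw [show a - 2 + 1 = a + 1 - 2 by ring]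
  exact h.mapN₁ _ _ v hv

lemma apply_eq_zero_of_mem_Bc_of_mem_Zc (hd : IsDifferential Hgr N₁ N₂ ψ dd)
    (hx : x ∈ Bc Hgr dd a b) (hy : y ∈ Zc Hgr dd a' b') : ψ x y = 0 := by
  obtain ⟨v, -, rfl⟩ := hx
  simpa [LinearMap.mem_ker.1 hy.1] using hd.skew v y

lemma apply_eq_zero_of_mem_Zc_of_mem_Bc (hd : IsDifferential Hgr N₁ N₂ ψ dd)
    (hx : x ∈ Zc Hgr dd a b) (hy : y ∈ Bc Hgr dd a' b') : ψ x y = 0 := by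
  obtain ⟨v, -, rfl⟩ := hy
  simpa [LinearMap.mem_ker.1 hx.1] using hd.skew x v

lemma apply_string_eq_of_sub_mem_Bc (h : IsHL Hgr N₁ N₂) (hd : IsDifferential Hgr N₁ N₂ ψ dd)
    {z t : H} (hz : z ∈ Zc Hgr dd a b) (hy : y ∈ Zc Hgr dd a' b') (hxz : x - z ∈ Bc Hgr dd a b)
    (hyt : y - t ∈ Bc Hgr dd a' b') (r s : ℕ) :
    ψ x ((N₁ ^ r) ((N₂ ^ s) y)) = ψ z ((N₁ ^ r) ((N₂ ^ s) t)) := by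
  have hNy : (N₁ ^ r) ((N₂ ^ s) y) ∈ Zc Hgr dd (a' - 2 * r) (b' - 2 * s) :=
    pow_apply_mem (G := fun c => Zc Hgr dd c _) (fun _ _ => hd.apply_mem_Zc h) r rfl
      (pow_apply_mem (G := fun c => Zc Hgr dd a' c) (fun _ _ => hd.swap.apply_mem_Zc h.swap) s
        rfl hy)
  have hNyt : (N₁ ^ r) ((N₂ ^ s) (y - t)) ∈ Bc Hgr dd (a' - 2 * r) (b' - 2 * s) :=
    pow_apply_mem (G := fun c => Bc Hgr dd c _) (fun _ _ => hd.apply_mem_Bc h) r rfl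
      (pow_apply_mem (G := fun c => Bc Hgr dd a' c) (fun _ _ => hd.swap.apply_mem_Bc h.swap) s
        rfl hyt)
  have hleft := hd.apply_eq_zero_of_mem_Bc_of_mem_Zc hxz hNy
  have hright := hd.apply_eq_zero_of_mem_Zc_of_mem_Bc hz hNyt
  rw [map_sub, LinearMap.sub_apply, sub_eq_zero] at hleft
  rw [map_sub, map_sub, map_sub, sub_eq_zero] at hright
  rw [hleft, hright]

lemma disjoint_Kc_Bc (h : IsHL Hgr N₁ N₂) (hψ : IsPolarization Hgr N₁ N₂ ψ)
    (hw : IsW Hgr N₁ N₂ w) (hinv : winv ∘ₗ w = LinearMap.id)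
    (hd : IsDifferential Hgr N₁ N₂ ψ dd) (a b : ℤ) :
    Disjoint (Kc Hgr w winv dd a b) (Bc Hgr dd a b) := by
  refine Submodule.disjoint_def.2 fun x hx hxB => ?_
  have hφ := hψ.weyl_anisotropic h hw
  have hadj := hd.isAdjointPair_dstar h hinv
  have hδ := (apply_eq_zero_of_laplacian hφ hadj hd.sq hx.1).2
  obtain ⟨v, -, rfl⟩ := hxB
  exact apply_eq_zero_of_adjoint_apply hφ hadj hδ

lemma Kc_le_Zc (h : IsHL Hgr N₁ N₂) (hψ : IsPolarization Hgr N₁ N₂ ψ)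
    (hw : IsW Hgr N₁ N₂ w) (hinv : winv ∘ₗ w = LinearMap.id)
    (hd : IsDifferential Hgr N₁ N₂ ψ dd) (a b : ℤ) :
    Kc Hgr w winv dd a b ≤ Zc Hgr dd a b := fun _ hx =>
  ⟨(apply_eq_zero_of_laplacian (hψ.weyl_anisotropic h hw) (hd.isAdjointPair_dstar h hinv) hd.sq
    hx.1).1, hx.2⟩

lemma Zc_le_Kc_sup_Bc (h : IsHL Hgr N₁ N₂) (hψ : IsPolarization Hgr N₁ N₂ ψ)
    (hw : IsW Hgr N₁ N₂ w) (hinv : winv ∘ₗ w = LinearMap.id)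
    (hd : IsDifferential Hgr N₁ N₂ ψ dd) (a b : ℤ) :
    Zc Hgr dd a b ≤ Kc Hgr w winv dd a b ⊔ Bc Hgr dd a b := by
  intro y hy
  have := h.findim
  obtain ⟨u, hu, hδ⟩ := exists_exact_sub_mem_ker_adjoint (hψ.weyl_anisotropic h hw)
    (hd.isAdjointPair_dstar h hinv) ((hd.Bc_le_Zc a b).trans inf_le_right)
    (fun _ hx => dstar_apply_mem h hw hinv hd hx) hy.2
  obtain ⟨hcocycle, hmem⟩ := sub_mem hy (hd.Bc_le_Zc a b hu)
  have hharmonic : lap w winv dd (y - u) = 0 := by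
    rw [lap, LinearMap.add_apply, LinearMap.comp_apply, LinearMap.comp_apply, hδ,
      LinearMap.mem_ker.1 hcocycle, map_zero, map_zero, add_zero]
  exact Submodule.mem_sup.2 ⟨y - u, ⟨hharmonic, hmem⟩, u, hu, sub_add_cancel y u⟩

lemma isLefschetz_Kc (h : IsHL Hgr N₁ N₂) (hw : IsW Hgr N₁ N₂ w)
    (hinv : winv ∘ₗ w = LinearMap.id) (hd : IsDifferential Hgr N₁ N₂ ψ dd) (b : ℤ) :
    IsLefschetz (fun a => Kc Hgr w winv dd a b) N₁ := by
  simp only [Kc, inf_comm (LinearMap.ker _)]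
  exact (h.isLefschetz b).inf_ker (h.isLefschetz b) (commute_lap h hw hinv hd)
    fun _ _ hx => lap_apply_mem h hw hinv hd hx

lemma mem_Bc_of_pow_apply_mem_Bc (h : IsHL Hgr N₁ N₂) (hψ : IsPolarization Hgr N₁ N₂ ψ)
    (hw : IsW Hgr N₁ N₂ w) (hinv : winv ∘ₗ w = LinearMap.id)
    (hd : IsDifferential Hgr N₁ N₂ ψ dd) {a : ℕ} (hx : x ∈ Zc Hgr dd a b)
    (hNx : (N₁ ^ a) x ∈ Bc Hgr dd (-(a : ℤ)) b) : x ∈ Bc Hgr dd a b :=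
  (hd.isLefschetz_Kc h hw hinv b).mem_of_pow_apply_mem (B := fun a => Bc Hgr dd a b)
    (fun _ _ => hd.apply_mem_Bc h) (fun a => hd.disjoint_Kc_Bc h hψ hw hinv a b)
    (hd.Zc_le_Kc_sup_Bc h hψ hw hinv a b hx) hNx

lemma exists_mem_Zc_sub_pow_apply_mem_Bc (h : IsHL Hgr N₁ N₂) (hψ : IsPolarization Hgr N₁ N₂ ψ)
    (hw : IsW Hgr N₁ N₂ w) (hinv : winv ∘ₗ w = LinearMap.id)
    (hd : IsDifferential Hgr N₁ N₂ ψ dd) {a : ℕ} (hy : y ∈ Zc Hgr dd (-(a : ℤ)) b) :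
    ∃ x ∈ Zc Hgr dd a b, y - (N₁ ^ a) x ∈ Bc Hgr dd (-(a : ℤ)) b := by
  obtain ⟨x, hx, hxy⟩ := (hd.isLefschetz_Kc h hw hinv b).exists_sub_pow_apply_mem
    (B := fun a => Bc Hgr dd a b) (hd.Zc_le_Kc_sup_Bc h hψ hw hinv _ b hy)
  exact ⟨x, hd.Kc_le_Zc h hψ hw hinv a b hx, hxy⟩

lemma exists_mem_Kc_sub_mem_Bc (h : IsHL Hgr N₁ N₂) (hψ : IsPolarization Hgr N₁ N₂ ψ)
    (hw : IsW Hgr N₁ N₂ w) (hinv : winv ∘ₗ w = LinearMap.id)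
    (hd : IsDifferential Hgr N₁ N₂ ψ dd) (hy : y ∈ Zc Hgr dd a b) :
    ∃ x ∈ Kc Hgr w winv dd a b, y - x ∈ Bc Hgr dd a b := by
  obtain ⟨x, hx, u, hu, rfl⟩ := Submodule.mem_sup.1 (hd.Zc_le_Kc_sup_Bc h hψ hw hinv a b hy)
  exact ⟨x, hx, by simpa using hu⟩

lemma pow_succ_apply_mem_Bc_iff (h : IsHL Hgr N₁ N₂) (hψ : IsPolarization Hgr N₁ N₂ ψ)
    (hw : IsW Hgr N₁ N₂ w) (hinv : winv ∘ₗ w = LinearMap.id)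
    (hd : IsDifferential Hgr N₁ N₂ ψ dd) {a : ℕ} (hx : x ∈ Kc Hgr w winv dd a b) :
    (N₁ ^ (a + 1)) x ∈ Bc Hgr dd (-(a : ℤ) - 2) b ↔ (N₁ ^ (a + 1)) x = 0 := by
  refine ⟨fun hB => ?_, fun h0 => h0 ▸ zero_mem _⟩
  exact Submodule.disjoint_def.1 (hd.disjoint_Kc_Bc h hψ hw hinv _ b) _
    (pow_apply_mem (hd.isLefschetz_Kc h hw hinv b).apply_mem (a + 1) (by push_cast; ring) hx) hB

end IsDifferential

/-- The cocycles whose classes are primitive in the cohomology `L_{a,b}`. -/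
def primCocycles (Hgr : ℤ → ℤ → Submodule ℝ H) (N₁ N₂ dd : H →ₗ[ℝ] H) (a b : ℕ) :
    Submodule ℝ H :=
  Zc Hgr dd a b ⊓ (Bc Hgr dd (-(a : ℤ) - 2) b).comap (N₁ ^ (a + 1)) ⊓
    (Bc Hgr dd a (-(b : ℤ) - 2)).comap (N₂ ^ (b + 1))

namespace IsDifferential

lemma mem_prim_iff (h : IsHL Hgr N₁ N₂) (hψ : IsPolarization Hgr N₁ N₂ ψ)
    (hw : IsW Hgr N₁ N₂ w) (hinv : winv ∘ₗ w = LinearMap.id)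
    (hd : IsDifferential Hgr N₁ N₂ ψ dd) {a b : ℕ} (hx : x ∈ Kc Hgr w winv dd a b) :
    (N₁ ^ (a + 1)) x ∈ Bc Hgr dd (-(a : ℤ) - 2) b ∧ (N₂ ^ (b + 1)) x ∈ Bc Hgr dd a (-(b : ℤ) - 2) ↔
      x ∈ prim Hgr N₁ N₂ a b := by
  have hN₂ := hd.swap.pow_succ_apply_mem_Bc_iff h.swap (hψ.swap h) (hw.swap h) hinv hx
  rw [hd.pow_succ_apply_mem_Bc_iff h hψ hw hinv hx]
  exact ⟨fun ⟨hN₁x, hN₂x⟩ => ⟨⟨hx.2, hN₁x⟩, hN₂.1 hN₂x⟩, fun ⟨⟨_, hN₁x⟩, hN₂x⟩ =>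
    ⟨hN₁x, hN₂.2 hN₂x⟩⟩

lemma exists_prim_sub_mem_Bc (h : IsHL Hgr N₁ N₂) (hψ : IsPolarization Hgr N₁ N₂ ψ)
    (hw : IsW Hgr N₁ N₂ w) (hinv : winv ∘ₗ w = LinearMap.id)
    (hd : IsDifferential Hgr N₁ N₂ ψ dd) {a b : ℕ} (hx : x ∈ primCocycles Hgr N₁ N₂ dd a b) :
    ∃ z ∈ prim Hgr N₁ N₂ a b, z ∈ Zc Hgr dd a b ∧ x - z ∈ Bc Hgr dd a b := by
  obtain ⟨⟨hxZ, hN₁x⟩, hN₂x⟩ := hx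
  obtain ⟨z, hz, hxz⟩ := hd.exists_mem_Kc_sub_mem_Bc h hψ hw hinv hxZ
  have hN₁xz : (N₁ ^ (a + 1)) (x - z) ∈ Bc Hgr dd (-(a : ℤ) - 2) b :=
    pow_apply_mem (G := fun c => Bc Hgr dd c b) (fun _ _ => hd.apply_mem_Bc h) _
      (by push_cast; ring) hxz
  have hN₂xz : (N₂ ^ (b + 1)) (x - z) ∈ Bc Hgr dd a (-(b : ℤ) - 2) :=
    pow_apply_mem (G := fun c => Bc Hgr dd a c) (fun _ _ => hd.swap.apply_mem_Bc h.swap) _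
      (by push_cast; ring) hxz
  refine ⟨z, (hd.mem_prim_iff h hψ hw hinv hz).1 ⟨?_, ?_⟩, hd.Kc_le_Zc h hψ hw hinv a b hz, hxz⟩
  · exact (Submodule.sub_mem_iff_right _ hN₁x).1 hN₁xz
  · exact (Submodule.sub_mem_iff_right _ hN₂x).1 hN₂xz

lemma primCocycles_symm (h : IsHL Hgr N₁ N₂) (hψ : IsPolarization Hgr N₁ N₂ ψ)
    (hw : IsW Hgr N₁ N₂ w) (hinv : winv ∘ₗ w = LinearMap.id)
    (hd : IsDifferential Hgr N₁ N₂ ψ dd) {a b : ℕ} (hx : x ∈ primCocycles Hgr N₁ N₂ dd a b)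
    (hy : y ∈ primCocycles Hgr N₁ N₂ dd a b) :
    ψ x ((N₁ ^ a) ((N₂ ^ b) y)) = ψ y ((N₁ ^ a) ((N₂ ^ b) x)) := by
  obtain ⟨z, hz, hzZ, hxz⟩ := hd.exists_prim_sub_mem_Bc h hψ hw hinv hx
  obtain ⟨t, ht, htZ, hyt⟩ := hd.exists_prim_sub_mem_Bc h hψ hw hinv hy
  rw [hd.apply_string_eq_of_sub_mem_Bc h hzZ hy.1.1 hxz hyt,
    hd.apply_string_eq_of_sub_mem_Bc h htZ hx.1.1 hyt hxz]
  exact hψ.primSymm a b z hz t ht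

lemma primCocycles_pos (h : IsHL Hgr N₁ N₂) (hψ : IsPolarization Hgr N₁ N₂ ψ)
    (hw : IsW Hgr N₁ N₂ w) (hinv : winv ∘ₗ w = LinearMap.id)
    (hd : IsDifferential Hgr N₁ N₂ ψ dd) {a b : ℕ} (hx : x ∈ primCocycles Hgr N₁ N₂ dd a b)
    (hxB : x ∉ Bc Hgr dd a b) : 0 < ψ x ((N₁ ^ a) ((N₂ ^ b) x)) := by
  obtain ⟨z, hz, hzZ, hxz⟩ := hd.exists_prim_sub_mem_Bc h hψ hw hinv hx
  rw [hd.apply_string_eq_of_sub_mem_Bc h hzZ hx.1.1 hxz hxz]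
  exact hψ.primPosDef a b z hz fun hz0 => hxB (by simpa [hz0] using hxz)

end IsDifferential

end Cohomology

end HLS

open HLS in
/-- let `d` be a differential on a polarized bigraded Hodge–Lefschetz
structure `(H, N₁, N₂, ψ)`, and let `L_{a,b} = ker(d : H_{a,b} → H_{a-1,b-1})/d(H_{a+1,b+1})`
be the cohomology. Then `N₁`, `N₂`, `ψ` descend to `L`, the result is again a polarized
bigraded Hodge–Lefschetz structure, and under the isomorphism `L_{a,b} ≅ ker Δ ∩ H_{a,b}` the
primitive part of `L_{a,b}` corresponds to `ker Δ ∩ P_{a,b}`.  (All assertions about the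
quotients `L_{a,b}` are expressed on the level of cocycles, modulo coboundaries.) -/
theorem statement16
    {H : Type} [AddCommGroup H] [Module ℝ H]
    (Hgr : ℤ → ℤ → Submodule ℝ H) (N₁ N₂ : H →ₗ[ℝ] H)
    (hHL : IsHL Hgr N₁ N₂)
    (ψ : H →ₗ[ℝ] H →ₗ[ℝ] ℝ) (hψ : IsPolarization Hgr N₁ N₂ ψ)
    (w : H →ₗ[ℝ] H) (hw : IsW Hgr N₁ N₂ w)
    (winv : H →ₗ[ℝ] H) (hwinv : winv ∘ₗ w = LinearMap.id ∧ w ∘ₗ winv = LinearMap.id)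
    (dd : H →ₗ[ℝ] H) (hd : IsDifferential Hgr N₁ N₂ ψ dd) :
    -- `N₁` and `N₂` descend to well-defined operators on `L`
    (∀ a b : ℤ,
      (∀ x ∈ Zc Hgr dd a b, N₁ x ∈ Zc Hgr dd (a - 2) b) ∧
      (∀ x ∈ Bc Hgr dd a b, N₁ x ∈ Bc Hgr dd (a - 2) b) ∧
      (∀ x ∈ Zc Hgr dd a b, N₂ x ∈ Zc Hgr dd a (b - 2)) ∧
      (∀ x ∈ Bc Hgr dd a b, N₂ x ∈ Bc Hgr dd a (b - 2))) ∧
    -- `ψ` descends to a well-defined bilinear form on `L`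
    (∀ a b a' b' : ℤ,
      (∀ x ∈ Bc Hgr dd a b, ∀ y ∈ Zc Hgr dd a' b', ψ x y = 0) ∧
      (∀ x ∈ Zc Hgr dd a b, ∀ y ∈ Bc Hgr dd a' b', ψ x y = 0)) ∧
    -- `N₁^a : L_{a,b} → L_{-a,b}` is an isomorphism for `a ≥ 0`
    (∀ (a : ℕ) (b : ℤ),
      (∀ x ∈ Zc Hgr dd (a : ℤ) b,
        (N₁ ^ a) x ∈ Bc Hgr dd (-(a : ℤ)) b → x ∈ Bc Hgr dd (a : ℤ) b) ∧
      (∀ y ∈ Zc Hgr dd (-(a : ℤ)) b,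
        ∃ x ∈ Zc Hgr dd (a : ℤ) b, y - (N₁ ^ a) x ∈ Bc Hgr dd (-(a : ℤ)) b)) ∧
    -- `N₂^b : L_{a,b} → L_{a,-b}` is an isomorphism for `b ≥ 0`
    (∀ (a : ℤ) (b : ℕ),
      (∀ x ∈ Zc Hgr dd a (b : ℤ),
        (N₂ ^ b) x ∈ Bc Hgr dd a (-(b : ℤ)) → x ∈ Bc Hgr dd a (b : ℤ)) ∧
      (∀ y ∈ Zc Hgr dd a (-(b : ℤ)),
        ∃ x ∈ Zc Hgr dd a (b : ℤ), y - (N₂ ^ b) x ∈ Bc Hgr dd a (-(b : ℤ)))) ∧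
    -- the induced form `(x, y) ↦ ψ(x, N₁^a N₂^b y)` is symmetric and positive definite on
    -- the primitive part of `L_{a,b}` (classes `[x]` with `N₁^{a+1}[x] = 0`, `N₂^{b+1}[x] = 0`)
    (∀ a b : ℕ,
      (∀ x ∈ Zc Hgr dd (a : ℤ) (b : ℤ), ∀ y ∈ Zc Hgr dd (a : ℤ) (b : ℤ),
        (N₁ ^ (a + 1)) x ∈ Bc Hgr dd (-(a : ℤ) - 2) (b : ℤ) →
        (N₂ ^ (b + 1)) x ∈ Bc Hgr dd (a : ℤ) (-(b : ℤ) - 2) →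
        (N₁ ^ (a + 1)) y ∈ Bc Hgr dd (-(a : ℤ) - 2) (b : ℤ) →
        (N₂ ^ (b + 1)) y ∈ Bc Hgr dd (a : ℤ) (-(b : ℤ) - 2) →
        ψ x (((N₁ ^ a) ∘ₗ (N₂ ^ b)) y) = ψ y (((N₁ ^ a) ∘ₗ (N₂ ^ b)) x)) ∧
      (∀ x ∈ Zc Hgr dd (a : ℤ) (b : ℤ),
        (N₁ ^ (a + 1)) x ∈ Bc Hgr dd (-(a : ℤ) - 2) (b : ℤ) →
        (N₂ ^ (b + 1)) x ∈ Bc Hgr dd (a : ℤ) (-(b : ℤ) - 2) →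
        x ∉ Bc Hgr dd (a : ℤ) (b : ℤ) →
        0 < ψ x (((N₁ ^ a) ∘ₗ (N₂ ^ b)) x))) ∧
    -- the natural map `ker Δ ∩ H_{a,b} → L_{a,b}` is an isomorphism ...
    (∀ a b : ℤ,
      (∀ x ∈ Kc Hgr w winv dd a b, x ∈ Zc Hgr dd a b) ∧
      (∀ x ∈ Kc Hgr w winv dd a b, x ∈ Bc Hgr dd a b → x = 0) ∧
      (∀ y ∈ Zc Hgr dd a b, ∃ x ∈ Kc Hgr w winv dd a b, y - x ∈ Bc Hgr dd a b)) ∧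
    -- ... under which the primitive part of `L_{a,b}` corresponds to `ker Δ ∩ P_{a,b}`
    (∀ a b : ℕ, ∀ x ∈ Kc Hgr w winv dd (a : ℤ) (b : ℤ),
      (((N₁ ^ (a + 1)) x ∈ Bc Hgr dd (-(a : ℤ) - 2) (b : ℤ)) ∧
        ((N₂ ^ (b + 1)) x ∈ Bc Hgr dd (a : ℤ) (-(b : ℤ) - 2))) ↔
      x ∈ prim Hgr N₁ N₂ a b) := by
  have hinv := hwinv.1
  have h' := hHL.swap
  have hψ' := hψ.swap hHL
  have hw' := hw.swap hHL
  have hd' := hd.swap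
  refine ⟨fun a b => ⟨fun x => hd.apply_mem_Zc hHL, fun x => hd.apply_mem_Bc hHL,
      fun x => hd'.apply_mem_Zc h', fun x => hd'.apply_mem_Bc h'⟩,
    fun a b a' b' => ⟨fun x hx y => hd.apply_eq_zero_of_mem_Bc_of_mem_Zc hx,
      fun x hx y => hd.apply_eq_zero_of_mem_Zc_of_mem_Bc hx⟩,
    fun a b => ⟨fun x => hd.mem_Bc_of_pow_apply_mem_Bc hHL hψ hw hinv,
      fun y => hd.exists_mem_Zc_sub_pow_apply_mem_Bc hHL hψ hw hinv⟩,
    fun a b => ⟨fun x => hd'.mem_Bc_of_pow_apply_mem_Bc h' hψ' hw' hinv,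
      fun y => hd'.exists_mem_Zc_sub_pow_apply_mem_Bc h' hψ' hw' hinv⟩,
    fun a b => ⟨fun x hx y hy hN₁x hN₂x hN₁y hN₂y =>
        hd.primCocycles_symm hHL hψ hw hinv ⟨⟨hx, hN₁x⟩, hN₂x⟩ ⟨⟨hy, hN₁y⟩, hN₂y⟩,
      fun x hx hN₁x hN₂x => hd.primCocycles_pos hHL hψ hw hinv ⟨⟨hx, hN₁x⟩, hN₂x⟩⟩,
    fun a b => ⟨fun x hx => hd.Kc_le_Zc hHL hψ hw hinv a b hx,
      Submodule.disjoint_def.1 (hd.disjoint_Kc_Bc hHL hψ hw hinv a b),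
      fun y => hd.exists_mem_Kc_sub_mem_Bc hHL hψ hw hinv⟩,
    fun a b x => hd.mem_prim_iff hHL hψ hw hinv⟩
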